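/- arXiv:1903.05340 — 3 statements merged into one kernel-verified Lean document; each statement's English description precedes it below -/
import Mathlib

section
/- Let N = 1 and λ > 0. Let w₁, w₂ : ℝ → ℝ be continuous functions, each with radial decay of rate √λ. Then there exist constants c, C, R₀ > 0 such that for all R ≥ R₀, c·R·e^{−2√λ·R} ≤ ∫_ℝ w₁(x)²·w₂(x − R)² dx ≤ C·R·e^{−2√λ·R}. -/
open MeasureTheory Real

/-- A continuous function `w : ℝ → ℝ` has radial decay of rate `√lam`:
`w` is everywhere positive and there are `M, c, C > 0` with
`c e^{-√lam |x|} ≤ w x ≤ C e^{-√lam |x|}` for `|x| ≥ M`. -/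
def HasRadialDecay1D (w : ℝ → ℝ) (lam : ℝ) : Prop :=
  (∀ x, 0 < w x) ∧
  ∃ M c C : ℝ, 0 < M ∧ 0 < c ∧ 0 < C ∧
    ∀ x : ℝ, M ≤ |x| →
      c * Real.exp (-Real.sqrt lam * |x|) ≤ w x ∧
      w x ≤ C * Real.exp (-Real.sqrt lam * |x|)

/-!
A continuous positive function comparable to `e^{-√λ|x|}` near infinity is comparable to it on all
of `ℝ`, so both profiles may be replaced by exponentials. With `k = 2√λ` this leaves the integral
of `e^{-k(|x| + |x - R|)}`. Since `|x| + |x - R| = R + 2 dist(x, [0, R])`, the segment `[0, R]`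
contributes `R e^{-kR}` and each half-line outside it only `e^{-kR} / (2k)`.
-/

open Asymptotics Filter Set

theorem isBigO_top_of_isBigO_cocompact {X E F : Type*} [TopologicalSpace X]
    [SeminormedAddCommGroup E] [NormedAddCommGroup F] {f : X → E} {g : X → F}
    (hf : Continuous f) (hg : Continuous g) (hg0 : ∀ x, g x ≠ 0) (h : f =O[cocompact X] g) :
    f =O[⊤] g := by
  obtain ⟨C, hC⟩ := h.bound
  obtain ⟨K, hK, hKC⟩ := mem_cocompact.1 hC
  have h_on : f =O[𝓟 K] g :=
    (hf.continuousOn.isBigO_principal hK (c := (1 : ℝ)) (by simp)).trans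
      (hg.continuousOn.isBigO_rev_principal hK (fun x _ ↦ hg0 x) 1)
  have h_off : f =O[𝓟 Kᶜ] g := isBigO_principal.2 ⟨C, hKC⟩
  simpa only [sup_principal, union_compl_self, principal_univ] using h_on.sup h_off

theorem HasRadialDecay1D.isTheta {w : ℝ → ℝ} {lam : ℝ} (hw : HasRadialDecay1D w lam)
    (hwc : Continuous w) : w =Θ[⊤] fun x ↦ exp (-√lam * |x|) := by
  obtain ⟨hpos, M, c, C, -, hc, -, hbounds⟩ := hw
  have h_far : ∀ᶠ x : ℝ in cocompact ℝ, M ≤ |x| :=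
    (tendsto_norm_cocompact_atTop (E := ℝ)).eventually_ge_atTop M
  have hexp : Continuous fun x : ℝ ↦ exp (-√lam * |x|) := by fun_prop
  constructor
  · refine isBigO_top_of_isBigO_cocompact hwc hexp (fun x ↦ (exp_pos _).ne') (.of_bound C ?_)
    filter_upwards [h_far] with x hx
    simpa only [norm_of_nonneg (hpos x).le, norm_of_nonneg (exp_pos _).le] using (hbounds x hx).2
  · refine isBigO_top_of_isBigO_cocompact hexp hwc (fun x ↦ (hpos x).ne') (.of_bound c⁻¹ ?_)
    filter_upwards [h_far] with x hx
    rw [norm_of_nonneg (hpos x).le, norm_of_nonneg (exp_pos _).le, le_inv_mul_iff₀ hc]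
    exact (hbounds x hx).1

theorem exists_pos_mul_le_and_le_mul_of_isTheta {α : Type*} {l : Filter α} {f g : α → ℝ}
    (h : f =Θ[l] g) (hf : 0 ≤ᶠ[l] f) (hg : 0 ≤ᶠ[l] g) :
    ∃ c C : ℝ, 0 < c ∧ 0 < C ∧ ∀ᶠ x in l, c * g x ≤ f x ∧ f x ≤ C * g x := by
  obtain ⟨C, hC, hfg⟩ := h.1.exists_pos
  obtain ⟨D, hD, hgf⟩ := h.2.exists_pos
  refine ⟨D⁻¹, C, inv_pos.2 hD, hC, ?_⟩
  filter_upwards [hfg.bound, hgf.bound, hf, hg] with x hfgx hgfx hfx hgx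
  rw [norm_of_nonneg hfx, norm_of_nonneg hgx] at hfgx hgfx
  exact ⟨(inv_mul_le_iff₀ hD).2 hgfx, hfgx⟩

section ParametricIntegral

variable {ι α : Type*} [MeasurableSpace α] {μ : Measure α} {l : Filter ι}

theorem isBigO_integral_of_isBigO_prod_top {E : Type*} [NormedAddCommGroup E] [NormedSpace ℝ E]
    {F : ι → α → E} {G : ι → α → ℝ} (hG : ∀ᶠ i in l, Integrable (G i) μ)
    (hG0 : ∀ᶠ i in l, 0 ≤ᵐ[μ] G i) (h : Function.uncurry F =O[l ×ˢ ⊤] Function.uncurry G) :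
    (fun i ↦ ∫ x, F i x ∂μ) =O[l] fun i ↦ ∫ x, G i x ∂μ := by
  obtain ⟨C, hC⟩ := h.bound
  rw [← principal_univ, eventually_prod_principal_iff] at hC
  refine .of_bound C ?_
  filter_upwards [hC, hG, hG0] with i hFG hGi hGi0
  calc ‖∫ x, F i x ∂μ‖
      ≤ ∫ x, C * G i x ∂μ := by
        refine norm_integral_le_of_norm_le (hGi.const_mul C) ?_
        filter_upwards [hGi0] with x hx
        simpa only [Function.uncurry_apply_pair, norm_of_nonneg hx] using hFG x (mem_univ x)
    _ = C * ‖∫ x, G i x ∂μ‖ := by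
        rw [integral_const_mul, norm_of_nonneg (integral_nonneg_of_ae hGi0)]

theorem isTheta_integral_of_isTheta_prod_top {F G : ι → α → ℝ}
    (hF : ∀ᶠ i in l, AEStronglyMeasurable (F i) μ) (hG : ∀ᶠ i in l, Integrable (G i) μ)
    (hF0 : ∀ᶠ i in l, 0 ≤ᵐ[μ] F i) (hG0 : ∀ᶠ i in l, 0 ≤ᵐ[μ] G i)
    (h : Function.uncurry F =Θ[l ×ˢ ⊤] Function.uncurry G) :
    (fun i ↦ ∫ x, F i x ∂μ) =Θ[l] fun i ↦ ∫ x, G i x ∂μ := by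
  refine ⟨isBigO_integral_of_isBigO_prod_top hG hG0 h.1,
    isBigO_integral_of_isBigO_prod_top ?_ hF0 h.2⟩
  obtain ⟨C, hC⟩ := h.1.bound
  rw [← principal_univ, eventually_prod_principal_iff] at hC
  filter_upwards [hC, hF, hG] with i hFG hFi hGi
  have h_slice : F i =O[⊤] G i := isBigO_top.2 ⟨C, fun x ↦ hFG x (mem_univ x)⟩
  exact h_slice.integrable hFi hGi

end ParametricIntegral

section TwoCenterExponential

variable {k R : ℝ}

theorem integrable_exp_neg_mul_abs (hk : 0 < k) : Integrable fun x ↦ exp (-k * |x|) := by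
  refine .of_integral_ne_zero ?_
  rw [integral_comp_abs (f := fun x ↦ exp (-k * x)), integral_exp_mul_Ioi (neg_lt_zero.2 hk),
    mul_zero, exp_zero, neg_div_neg_eq]
  positivity

theorem integrable_exp_neg_mul_abs_add_abs_sub (hk : 0 < k) :
    Integrable fun x ↦ exp (-k * (|x| + |x - R|)) := by
  refine (integrable_exp_neg_mul_abs hk).mono' (by fun_prop) (.of_forall fun x ↦ ?_)
  rw [norm_of_nonneg (exp_pos _).le, exp_le_exp]
  exact mul_le_mul_of_nonpos_left (le_add_of_nonneg_right (abs_nonneg _)) (neg_nonpos.2 hk.le)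

theorem exp_neg_mul_abs_add_abs_sub_of_nonpos (hR : 0 ≤ R) {x : ℝ} (hx : x ≤ 0) :
    exp (-k * (|x| + |x - R|)) = exp (-k * R) * exp (2 * k * x) := by
  rw [abs_of_nonpos hx, abs_of_nonpos (by linarith), ← exp_add]
  ring_nf

theorem exp_neg_mul_abs_add_abs_sub_of_mem_Icc {x : ℝ} (hx : x ∈ Icc 0 R) :
    exp (-k * (|x| + |x - R|)) = exp (-k * R) := by
  rw [abs_of_nonneg hx.1, abs_of_nonpos (by linarith [hx.2])]
  ring_nf

theorem exp_neg_mul_abs_add_abs_sub_of_ge (hR : 0 ≤ R) {x : ℝ} (hx : R ≤ x) :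
    exp (-k * (|x| + |x - R|)) = exp (k * R) * exp (-2 * k * x) := by
  rw [abs_of_nonneg (by linarith), abs_of_nonneg (by linarith), ← exp_add]
  ring_nf

theorem integral_exp_neg_mul_abs_add_abs_sub (hk : 0 < k) (hR : 0 ≤ R) :
    ∫ x, exp (-k * (|x| + |x - R|)) = (R + 1 / k) * exp (-k * R) := by
  have h_int := integrable_exp_neg_mul_abs_add_abs_sub (R := R) hk
  have h_left : ∫ x in Iic 0, exp (-k * (|x| + |x - R|)) = exp (-k * R) / (2 * k) := by
    rw [setIntegral_congr_fun measurableSet_Iic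
      fun x hx ↦ exp_neg_mul_abs_add_abs_sub_of_nonpos hR hx, integral_const_mul,
      integral_exp_mul_Iic (by linarith), mul_zero, exp_zero, mul_one_div]
  have h_mid : ∫ x in Ioc 0 R, exp (-k * (|x| + |x - R|)) = R * exp (-k * R) := by
    rw [setIntegral_congr_fun measurableSet_Ioc
      fun x hx ↦ exp_neg_mul_abs_add_abs_sub_of_mem_Icc (Ioc_subset_Icc_self hx),
      setIntegral_const, volume_real_Ioc_of_le hR, sub_zero, smul_eq_mul]
  have h_right : ∫ x in Ioi R, exp (-k * (|x| + |x - R|)) = exp (-k * R) / (2 * k) := by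
    have h_exp : exp (-k * R) = exp (k * R) * exp (-2 * k * R) := by rw [← exp_add]; ring_nf
    rw [setIntegral_congr_fun measurableSet_Ioi
      fun x hx ↦ exp_neg_mul_abs_add_abs_sub_of_ge hR (le_of_lt hx), integral_const_mul,
      integral_exp_mul_Ioi (by linarith), h_exp]
    field
  rw [← setIntegral_univ, ← Iic_union_Ioi (a := (0 : ℝ)),
    setIntegral_union (Iic_disjoint_Ioi le_rfl) measurableSet_Ioi h_int.integrableOn
      h_int.integrableOn,
    ← Ioc_union_Ioi_eq_Ioi hR,
    setIntegral_union (Ioc_disjoint_Ioi le_rfl) measurableSet_Ioi h_int.integrableOn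
      h_int.integrableOn, h_left, h_mid, h_right]
  field

theorem integral_exp_neg_mul_abs_add_abs_sub_isTheta (hk : 0 < k) :
    (fun R ↦ ∫ x, exp (-k * (|x| + |x - R|))) =Θ[atTop] fun R ↦ R * exp (-k * R) := by
  have h_eq : (fun R ↦ ∫ x, exp (-k * (|x| + |x - R|)))
      =ᶠ[atTop] fun R ↦ (R + 1 / k) * exp (-k * R) := by
    filter_upwards [eventually_ge_atTop 0] with R hR
    exact integral_exp_neg_mul_abs_add_abs_sub hk hR
  have h_linear : (fun R : ℝ ↦ R + 1 / k) =Θ[atTop] fun R ↦ R :=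
    (isLittleO_const_id_atTop (1 / k)).right_isTheta_add'.symm
  exact h_eq.trans_isTheta (h_linear.mul (isTheta_refl _ _))

end TwoCenterExponential

theorem integral_mul_translate_isTheta {f g : ℝ → ℝ} {k : ℝ} (hk : 0 < k)
    (hfm : AEStronglyMeasurable f) (hgm : AEStronglyMeasurable g) (hf0 : 0 ≤ f) (hg0 : 0 ≤ g)
    (hf : f =Θ[⊤] fun x ↦ exp (-k * |x|)) (hg : g =Θ[⊤] fun x ↦ exp (-k * |x|)) :
    (fun R ↦ ∫ x, f x * g (x - R)) =Θ[atTop] fun R ↦ R * exp (-k * R) := by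
  have h_pointwise : (fun p : ℝ × ℝ ↦ f p.2 * g (p.2 - p.1))
      =Θ[⊤] fun p ↦ exp (-k * (|p.2| + |p.2 - p.1|)) := by
    simp_rw [mul_add, exp_add]
    exact IsTheta.mul ⟨hf.1.comp_tendsto tendsto_top, hf.2.comp_tendsto tendsto_top⟩
      ⟨hg.1.comp_tendsto tendsto_top, hg.2.comp_tendsto tendsto_top⟩
  refine IsTheta.trans ?_ (integral_exp_neg_mul_abs_add_abs_sub_isTheta hk)
  refine isTheta_integral_of_isTheta_prod_top
    (.of_forall fun R ↦ hfm.mul (hgm.comp_measurePreserving (measurePreserving_sub_right volume R)))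
    (.of_forall fun R ↦ integrable_exp_neg_mul_abs_add_abs_sub hk)
    (.of_forall fun R ↦ .of_forall fun x ↦ mul_nonneg (hf0 x) (hg0 _))
    (.of_forall fun R ↦ .of_forall fun x ↦ (exp_pos _).le) (h_pointwise.mono le_top)

theorem HasRadialDecay1D.sq_isTheta {w : ℝ → ℝ} {lam : ℝ} (hw : HasRadialDecay1D w lam)
    (hwc : Continuous w) : (fun x ↦ w x ^ 2) =Θ[⊤] fun x ↦ exp (-(2 * √lam) * |x|) := by
  refine ((hw.isTheta hwc).pow 2).trans_eventuallyEq (.of_forall fun x ↦ ?_)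
  calc exp (-√lam * |x|) ^ 2 = exp ((2 : ℕ) * (-√lam * |x|)) := (exp_nat_mul _ 2).symm
    _ = exp (-(2 * √lam) * |x|) := by push_cast; ring_nf

theorem interaction_estimate_equal_rates_dim_one
    (lam : ℝ) (hlam : 0 < lam)
    (w₁ w₂ : ℝ → ℝ) (hw₁c : Continuous w₁) (hw₂c : Continuous w₂)
    (hw₁ : HasRadialDecay1D w₁ lam) (hw₂ : HasRadialDecay1D w₂ lam) :
    ∃ c C R₀ : ℝ, 0 < c ∧ 0 < C ∧ 0 < R₀ ∧
      ∀ R : ℝ, R₀ ≤ R →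
        c * R * Real.exp (-2 * Real.sqrt lam * R)
            ≤ (∫ x : ℝ, (w₁ x) ^ 2 * (w₂ (x - R)) ^ 2) ∧
        (∫ x : ℝ, (w₁ x) ^ 2 * (w₂ (x - R)) ^ 2)
            ≤ C * R * Real.exp (-2 * Real.sqrt lam * R) := by
  have hk : 0 < 2 * √lam := mul_pos two_pos (sqrt_pos.2 hlam)
  have h_theta : (fun R ↦ ∫ x, w₁ x ^ 2 * w₂ (x - R) ^ 2)
      =Θ[atTop] fun R ↦ R * exp (-(2 * √lam) * R) :=
    integral_mul_translate_isTheta hk (hw₁c.pow 2).aestronglyMeasurable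
      (hw₂c.pow 2).aestronglyMeasurable (fun x ↦ sq_nonneg _) (fun x ↦ sq_nonneg _)
      (hw₁.sq_isTheta hw₁c) (hw₂.sq_isTheta hw₂c)
  obtain ⟨c, C, hc, hC, h_bounds⟩ := exists_pos_mul_le_and_le_mul_of_isTheta h_theta
    (.of_forall fun R ↦ integral_nonneg fun x ↦ by positivity)
    ((eventually_ge_atTop 0).mono fun R hR ↦ mul_nonneg hR (exp_pos _).le)
  obtain ⟨R₀, hR₀, h_from⟩ := (atTop_basis_Ioi' (0 : ℝ)).eventually_iff.1 h_bounds
  refine ⟨c, C, R₀ + 1, hc, hC, by linarith, fun R hR ↦ ?_⟩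
  simpa only [mul_assoc, neg_mul] using h_from (lt_of_lt_of_le (lt_add_one R₀) hR)
end

section
/- Let N ∈ {1,2,3}, let λ > 0, let w : ℝ^N → ℝ be a continuous function with radial decay of rate √λ, and let e₁ ∈ ℝ^N be a unit vector. Let M₀ > 0 and let f : ℝ^N → ℝ be measurable, bounded, nonnegative, vanishing outside the ball {‖x‖ ≤ M₀}, and with ∫_{ℝ^N} f > 0. Then there exist constants c, C, R₀ > 0 such that for all R ≥ R₀, c·R^{1−N}·e^{−2√λ·R} ≤ ∫_{ℝ^N} f(x)·w(x − R·e₁)² dx ≤ C·R^{1−N}·e^{−2√λ·R}. -/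
open MeasureTheory Real

/-- A continuous function `w : ℝ^N → ℝ` has radial decay of rate `√lam`:
`w` is everywhere positive and there are `M, c, C > 0` with
`c‖x‖^{-(N-1)/2} e^{-√lam ‖x‖} ≤ w x ≤ C‖x‖^{-(N-1)/2} e^{-√lam ‖x‖}` for `‖x‖ ≥ M`. -/
def HasRadialDecay {N : ℕ} (w : EuclideanSpace ℝ (Fin N) → ℝ) (lam : ℝ) : Prop :=
  (∀ x, 0 < w x) ∧
  ∃ M c C : ℝ, 0 < M ∧ 0 < c ∧ 0 < C ∧
    ∀ x : EuclideanSpace ℝ (Fin N), M ≤ ‖x‖ →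
      c * ‖x‖ ^ (-((N : ℝ) - 1) / 2) * Real.exp (-Real.sqrt lam * ‖x‖) ≤ w x ∧
      w x ≤ C * ‖x‖ ^ (-((N : ℝ) - 1) / 2) * Real.exp (-Real.sqrt lam * ‖x‖)

/-! A weight that changes at most by a bounded factor under bounded translations can be pulled out
of an integral against a fixed boundedly supported density: `∫ f(x) g(y + x) dx` is comparable to
`g(y) ∫ f` as `y → ∞`. The profile `‖x‖ ^ a * exp (s * ‖x‖)` is such a weight because
`‖y + x‖ - ‖y‖` stays bounded for `x` in a bounded set, which makes the powers asymptotically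
equivalent and the exponentials comparable. Apply this to `w ^ 2` and `y = -R e₁`. -/

open Filter Asymptotics Bornology Function

theorem isTheta_comp_tendsto {α β V W : Type*} [Norm V] [Norm W] {l : Filter α} {l' : Filter β}
    {u : α → V} {v : α → W} {k : β → α} (h : u =Θ[l] v) (hk : Tendsto k l' l) :
    (u ∘ k) =Θ[l'] (v ∘ k) :=
  ⟨h.1.comp_tendsto hk, h.2.comp_tendsto hk⟩

section IntegralAgainstUniformAsymptotics

variable {X ι : Type*} {l : Filter ι} {K : Set X} {f : X → ℝ} {F : ι × X → ℝ} {G : ι → ℝ}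

theorem eventually_norm_mul_le_of_isBigO (hfK : support f ⊆ K)
    (hF : F =O[l ×ˢ 𝓟 K] fun p => G p.1) :
    ∃ C, ∀ᶠ i in l, ∀ x, ‖f x * F (i, x)‖ ≤ ‖f x‖ * (C * ‖G i‖) := by
  obtain ⟨C, hC⟩ := hF.bound
  refine ⟨C, (eventually_prod_principal_iff.mp hC).mono fun i hi x => ?_⟩
  by_cases hx : f x = 0
  · simp [hx]
  · rw [norm_mul]
    gcongr
    exact hi x (hfK hx)

variable [MeasurableSpace X] {μ : Measure X}

theorem isBigO_integral_mul (hf : Integrable f μ) (hfK : support f ⊆ K)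
    (hF : F =O[l ×ˢ 𝓟 K] fun p => G p.1) :
    (fun i => ∫ x, f x * F (i, x) ∂μ) =O[l] G := by
  obtain ⟨C, hC⟩ := eventually_norm_mul_le_of_isBigO hfK hF
  refine .of_bound ((∫ x, ‖f x‖ ∂μ) * C) (hC.mono fun i hi => ?_)
  calc ‖∫ x, f x * F (i, x) ∂μ‖ ≤ ∫ x, ‖f x‖ * (C * ‖G i‖) ∂μ :=
        norm_integral_le_of_norm_le (hf.norm.mul_const _) (.of_forall hi)
    _ = (∫ x, ‖f x‖ ∂μ) * C * ‖G i‖ := by rw [integral_mul_const, mul_assoc]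

theorem eventually_integrable_mul_of_isBigO (hf : Integrable f μ) (hfK : support f ⊆ K)
    (hFm : ∀ i, AEStronglyMeasurable (fun x => F (i, x)) μ)
    (hF : F =O[l ×ˢ 𝓟 K] fun p => G p.1) :
    ∀ᶠ i in l, Integrable (fun x => f x * F (i, x)) μ := by
  obtain ⟨C, hC⟩ := eventually_norm_mul_le_of_isBigO hfK hF
  exact hC.mono fun i hi =>
    (hf.norm.mul_const _).mono' (hf.aestronglyMeasurable.mul (hFm i)) (.of_forall hi)

theorem isBigO_integral_mul_right (hf_nonneg : 0 ≤ f) (hf_pos : 0 < ∫ x, f x ∂μ)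
    (hfK : support f ⊆ K) (hF_nonneg : 0 ≤ F)
    (hfF : ∀ᶠ i in l, Integrable (fun x => f x * F (i, x)) μ)
    (hF : (fun p => G p.1) =O[l ×ˢ 𝓟 K] F) :
    G =O[l] fun i => ∫ x, f x * F (i, x) ∂μ := by
  have hf : Integrable f μ := .of_integral_ne_zero hf_pos.ne'
  obtain ⟨C, hC⟩ := hF.bound
  refine .of_bound (C / ∫ x, f x ∂μ) ?_
  filter_upwards [eventually_prod_principal_iff.mp hC, hfF] with i hi hfFi
  have pointwise_le (x : X) : f x * ‖G i‖ ≤ C * (f x * F (i, x)) := by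
    by_cases hx : f x = 0
    · simp [hx]
    · have hGF := hi x (hfK hx)
      rw [norm_of_nonneg (hF_nonneg (i, x))] at hGF
      linarith [mul_le_mul_of_nonneg_left hGF (hf_nonneg x)]
  have integral_le : (∫ x, f x ∂μ) * ‖G i‖ ≤ C * ∫ x, f x * F (i, x) ∂μ := by
    simpa only [integral_mul_const, integral_const_mul] using
      integral_mono (hf.mul_const ‖G i‖) (hfFi.const_mul C) pointwise_le
  rw [norm_of_nonneg (integral_nonneg fun x => mul_nonneg (hf_nonneg x) (hF_nonneg (i, x))),
    div_mul_eq_mul_div, le_div_iff₀' hf_pos]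
  exact integral_le

theorem isTheta_integral_mul (hf_nonneg : 0 ≤ f) (hf_pos : 0 < ∫ x, f x ∂μ)
    (hfK : support f ⊆ K) (hF_nonneg : 0 ≤ F)
    (hFm : ∀ i, AEStronglyMeasurable (fun x => F (i, x)) μ)
    (hF : F =Θ[l ×ˢ 𝓟 K] fun p => G p.1) :
    (fun i => ∫ x, f x * F (i, x) ∂μ) =Θ[l] G :=
  have hf : Integrable f μ := .of_integral_ne_zero hf_pos.ne'
  ⟨isBigO_integral_mul hf hfK hF.1,
    isBigO_integral_mul_right hf_nonneg hf_pos hfK hF_nonneg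
      (eventually_integrable_mul_of_isBigO hf hfK hFm hF.1) hF.2⟩

end IntegralAgainstUniformAsymptotics

/-- A function `g` is *moderate at infinity* if `g (y + x)` is comparable to `g y` as `y → ∞`,
uniformly for `x` in any given bounded set. Uniformity in `x ∈ K` is encoded by the filter `𝓟 K` on
the second factor. These are the weights for which integrals against a fixed boundedly supported
density can be estimated. -/
def IsModerateAtInfinity {E : Type*} [SeminormedAddCommGroup E] (g : E → ℝ) : Prop :=
  ∀ ⦃K : Set E⦄, IsBounded K →
    (fun p : E × E => g (p.1 + p.2)) =Θ[cobounded E ×ˢ 𝓟 K] fun p => g p.1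

section Translation

variable {E : Type*} [SeminormedAddCommGroup E] {K : Set E}

theorem isBoundedUnder_abs_norm_add_sub_norm (hK : IsBounded K) (l : Filter E) :
    IsBoundedUnder (· ≤ ·) (l ×ˢ 𝓟 K) fun p => |‖p.1 + p.2‖ - ‖p.1‖| := by
  obtain ⟨B, hB⟩ := hK.exists_norm_le
  refine isBoundedUnder_of_eventually_le (a := B) ?_
  refine eventually_prod_principal_iff.mpr (.of_forall fun y x hx => ?_)
  calc |‖y + x‖ - ‖y‖| ≤ ‖y + x - y‖ := abs_norm_sub_norm_le _ _
    _ = ‖x‖ := by rw [add_sub_cancel_left]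
    _ ≤ B := hB x hx

theorem isEquivalent_norm_add_norm (hK : IsBounded K) :
    (fun p : E × E => ‖p.1 + p.2‖) ~[cobounded E ×ˢ 𝓟 K] fun p => ‖p.1‖ := by
  have bounded :
      (fun p : E × E => ‖p.1 + p.2‖ - ‖p.1‖) =O[cobounded E ×ˢ 𝓟 K] fun _ => (1 : ℝ) :=
    (isBigO_one_iff ℝ).mpr (isBoundedUnder_abs_norm_add_sub_norm hK _)
  have norm_atTop : Tendsto (fun p : E × E => ‖‖p.1‖‖) (cobounded E ×ˢ 𝓟 K) atTop := by
    simpa only [norm_norm, comp_def] using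
      (tendsto_norm_cobounded_atTop (E := E)).comp (tendsto_fst (g := 𝓟 K))
  exact bounded.trans_isLittleO ((isLittleO_const_left_of_ne one_ne_zero).mpr norm_atTop)

theorem tendsto_add_prod_principal_cobounded (hK : IsBounded K) :
    Tendsto (fun p : E × E => p.1 + p.2) (cobounded E ×ˢ 𝓟 K) (cobounded E) :=
  tendsto_norm_atTop_iff_cobounded.mp <|
    (isEquivalent_norm_add_norm hK).symm.tendsto_atTop
      (tendsto_norm_cobounded_atTop.comp tendsto_fst)

end Translation

namespace IsModerateAtInfinity

section Algebra

variable {E : Type*} [SeminormedAddCommGroup E] {g h : E → ℝ}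

theorem mul (hg : IsModerateAtInfinity g) (hh : IsModerateAtInfinity h) :
    IsModerateAtInfinity fun x => g x * h x :=
  fun _ hK => (hg hK).mul (hh hK)

theorem pow (hg : IsModerateAtInfinity g) (n : ℕ) : IsModerateAtInfinity fun x => g x ^ n :=
  fun _ hK => (hg hK).pow n

theorem congr_isTheta (hg : IsModerateAtInfinity g) (hhg : h =Θ[cobounded E] g) :
    IsModerateAtInfinity h := fun _ hK =>
  (isTheta_comp_tendsto hhg (tendsto_add_prod_principal_cobounded hK)).trans <|
    (hg hK).trans (hhg.symm.comp_fst _)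

theorem norm_rpow (a : ℝ) : IsModerateAtInfinity fun x : E => ‖x‖ ^ a := fun _ hK =>
  ((isEquivalent_norm_add_norm hK).rpow fun _ => norm_nonneg _).isTheta

theorem exp_mul_norm (s : ℝ) : IsModerateAtInfinity fun x : E => exp (s * ‖x‖) := fun _ hK => by
  obtain ⟨B, hB⟩ := (isBoundedUnder_abs_norm_add_sub_norm hK (cobounded E)).eventually_le
  refine isTheta_exp_comp_exp_comp.mpr (isBoundedUnder_of_eventually_le (a := |s| * B) ?_)
  filter_upwards [hB] with p hp
  rw [← mul_sub, abs_mul]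
  gcongr

end Algebra

theorem isTheta_integral {E : Type*} [SeminormedAddCommGroup E] [MeasurableSpace E] [BorelSpace E]
    {μ : Measure E} {f g : E → ℝ} (hg : IsModerateAtInfinity g) (hg_nonneg : 0 ≤ g)
    (hgm : Measurable g) (hf_nonneg : 0 ≤ f) (hf_pos : 0 < ∫ x, f x ∂μ)
    (hf_bdd : IsBounded (support f)) :
    (fun y => ∫ x, f x * g (y + x) ∂μ) =Θ[cobounded E] g :=
  isTheta_integral_mul (F := fun p => g (p.1 + p.2)) hf_nonneg hf_pos subset_rfl
    (fun _ => hg_nonneg _)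
    (fun y => (hgm.comp (continuous_const_add y).measurable).aestronglyMeasurable) (hg hf_bdd)

end IsModerateAtInfinity

theorem HasRadialDecay.isTheta {N : ℕ} {w : EuclideanSpace ℝ (Fin N) → ℝ} {lam : ℝ}
    (hw : HasRadialDecay w lam) :
    w =Θ[cobounded _] fun x => ‖x‖ ^ (-((N : ℝ) - 1) / 2) * exp (-√lam * ‖x‖) := by
  obtain ⟨w_pos, M, c, C, -, c_pos, -, hbound⟩ := hw
  have far : ∀ᶠ x : EuclideanSpace ℝ (Fin N) in cobounded _, M ≤ ‖x‖ :=
    tendsto_norm_cobounded_atTop.eventually_ge_atTop M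
  constructor
  · refine .of_bound C (far.mono fun x hx => ?_)
    rw [norm_of_nonneg (w_pos x).le, norm_of_nonneg (by positivity), ← mul_assoc]
    exact (hbound x hx).2
  · refine .of_bound c⁻¹ (far.mono fun x hx => ?_)
    rw [norm_of_nonneg (w_pos x).le, norm_of_nonneg (by positivity), le_inv_mul_iff₀ c_pos,
      ← mul_assoc]
    exact (hbound x hx).1

theorem tendsto_neg_smul_atTop_cobounded {E : Type*} [SeminormedAddCommGroup E] [NormedSpace ℝ E]
    {e : E} (he : ‖e‖ ≠ 0) : Tendsto (fun R : ℝ => -(R • e)) atTop (cobounded E) := by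
  refine tendsto_norm_atTop_iff_cobounded.mp ?_
  simpa only [norm_neg, norm_smul, norm_eq_abs] using
    tendsto_abs_atTop_atTop.atTop_mul_const ((norm_nonneg e).lt_of_ne' he)

theorem exists_pos_bounds_of_isTheta_atTop {u v : ℝ → ℝ} (huv : u =Θ[atTop] v) (hu : 0 ≤ᶠ[atTop] u)
    (hv : 0 ≤ᶠ[atTop] v) :
    ∃ c C R₀ : ℝ, 0 < c ∧ 0 < C ∧ 0 < R₀ ∧ ∀ R, R₀ ≤ R → c * v R ≤ u R ∧ u R ≤ C * v R := by
  obtain ⟨C, C_pos, hC⟩ := huv.1.exists_pos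
  obtain ⟨c, c_pos, hc⟩ := huv.2.exists_pos
  have bounds : ∀ᶠ R in atTop, c⁻¹ * v R ≤ u R ∧ u R ≤ C * v R := by
    filter_upwards [hu, hv, hC.bound, hc.bound] with R huR hvR huv_le hvu_le
    rw [norm_of_nonneg huR, norm_of_nonneg hvR] at huv_le hvu_le
    exact ⟨(inv_mul_le_iff₀ c_pos).mpr hvu_le, huv_le⟩
  obtain ⟨R₀, hR₀⟩ := (bounds.and (eventually_gt_atTop 0)).exists_forall_of_atTop
  exact ⟨c⁻¹, C, R₀, inv_pos.mpr c_pos, C_pos, (hR₀ R₀ le_rfl).2, fun R hR => (hR₀ R hR).1⟩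

theorem compact_bump_interaction_estimate_general {E : Type*} [SeminormedAddCommGroup E]
    [NormedSpace ℝ E] [MeasurableSpace E] [BorelSpace E] {μ : Measure E} {w f : E → ℝ} {a s : ℝ}
    {e : E} (hwm : Measurable w) (hw : w =Θ[cobounded E] fun x => ‖x‖ ^ a * exp (-s * ‖x‖))
    (he : ‖e‖ = 1) (hf_nonneg : ∀ x, 0 ≤ f x) (hf_bdd : IsBounded (support f))
    (hf_pos : 0 < ∫ x, f x ∂μ) :
    ∃ c C R₀ : ℝ, 0 < c ∧ 0 < C ∧ 0 < R₀ ∧ ∀ R, R₀ ≤ R →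
      c * R ^ (2 * a) * exp (-2 * s * R) ≤ ∫ x, f x * w (x - R • e) ^ 2 ∂μ ∧
        ∫ x, f x * w (x - R • e) ^ 2 ∂μ ≤ C * R ^ (2 * a) * exp (-2 * s * R) := by
  have w_sq_moderate : IsModerateAtInfinity fun x => w x ^ 2 :=
    (((IsModerateAtInfinity.norm_rpow a).mul (.exp_mul_norm (-s))).congr_isTheta hw).pow 2
  have integral_translate : (fun y => ∫ x, f x * w (y + x) ^ 2 ∂μ) =Θ[cobounded E]
      fun y => (‖y‖ ^ a * exp (-s * ‖y‖)) ^ 2 :=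
    (w_sq_moderate.isTheta_integral (fun x => sq_nonneg (w x)) (hwm.pow_const 2) hf_nonneg
      hf_pos hf_bdd).trans (hw.pow 2)
  have along_ray : (fun R : ℝ => ∫ x, f x * w (x - R • e) ^ 2 ∂μ) =Θ[atTop]
      fun R => (‖-(R • e)‖ ^ a * exp (-s * ‖-(R • e)‖)) ^ 2 := by
    simpa only [comp_def, neg_add_eq_sub] using
      isTheta_comp_tendsto integral_translate (tendsto_neg_smul_atTop_cobounded (he ▸ one_ne_zero))
  have profile_sq_eq (R : ℝ) (hR : 0 ≤ R) :
      (‖-(R • e)‖ ^ a * exp (-s * ‖-(R • e)‖)) ^ 2 = R ^ (2 * a) * exp (-2 * s * R) := by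
    rw [norm_neg, norm_smul, he, mul_one, norm_of_nonneg hR, mul_pow, ← exp_nat_mul,
      ← rpow_mul_natCast hR]
    push_cast
    ring_nf
  have profile_eventuallyEq := (eventually_ge_atTop 0).mono profile_sq_eq
  simpa only [mul_assoc] using exists_pos_bounds_of_isTheta_atTop
    (along_ray.trans_eventuallyEq profile_eventuallyEq)
    (.of_forall fun R => integral_nonneg fun x => mul_nonneg (hf_nonneg x) (sq_nonneg _))
    ((eventually_ge_atTop 0).mono fun R hR => by positivity)

theorem compact_bump_interaction_estimate
    (N : ℕ) (hN : N = 1 ∨ N = 2 ∨ N = 3)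
    (lam : ℝ) (hlam : 0 < lam)
    (w : EuclideanSpace ℝ (Fin N) → ℝ) (hwc : Continuous w) (hw : HasRadialDecay w lam)
    (e₁ : EuclideanSpace ℝ (Fin N)) (he₁ : ‖e₁‖ = 1)
    (M₀ : ℝ) (hM₀ : 0 < M₀)
    (f : EuclideanSpace ℝ (Fin N) → ℝ) (hfmeas : Measurable f)
    (hfbdd : ∃ B : ℝ, ∀ x, f x ≤ B)
    (hfnonneg : ∀ x, 0 ≤ f x)
    (hfsupp : ∀ x, M₀ < ‖x‖ → f x = 0)
    (hfpos : 0 < ∫ x, f x) :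
    ∃ c C R₀ : ℝ, 0 < c ∧ 0 < C ∧ 0 < R₀ ∧
      ∀ R : ℝ, R₀ ≤ R →
        c * R ^ ((1 : ℝ) - (N : ℝ)) * Real.exp (-2 * Real.sqrt lam * R)
            ≤ (∫ x, f x * (w (x - R • e₁)) ^ 2) ∧
        (∫ x, f x * (w (x - R • e₁)) ^ 2)
            ≤ C * R ^ ((1 : ℝ) - (N : ℝ)) * Real.exp (-2 * Real.sqrt lam * R) := by
  have exponent_eq : 2 * (-((N : ℝ) - 1) / 2) = 1 - N := by ring
  simpa only [exponent_eq] using compact_bump_interaction_estimate_general hwc.measurable hw.isTheta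
    he₁ hfnonneg (isBounded_iff_forall_norm_le.mpr
      ⟨M₀, fun x hx => not_lt.mp (mt (hfsupp x) hx)⟩) hfpos
end

section
/- Let N ∈ {1,2,3} and let g, h : [0,∞) → (0,∞) be strictly decreasing functions that are continuously differentiable on (0,∞), and for which there exist C, δ > 0 with g(r) + h(r) + |g'(r)| + |h'(r)| ≤ C·e^{−δ·r} for all r > 0. Define u(x) = g(‖x‖)², v(x) = h(‖x‖)², and F(z) = ∫_{ℝ^N} u(x)·v(x + z) dx. Then F is differentiable at every z ∈ ℝ^N, its gradient is given by ∇F(z) = ∫_{ℝ^N} g(‖x − z‖)²·2·h(‖x‖)·h'(‖x‖)·(x/‖x‖) dx, and ∇F(z) = 0 if and only if z = 0. -/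
open MeasureTheory Real

open Set InnerProductSpace
open scoped NNReal Gradient

/-!
The function `h ^ 2` is Lipschitz on `(0, ∞)`, so off the origin `v = h(‖·‖) ^ 2` agrees with a
Lipschitz function `w`, although `v` itself may jump at `0`. By Rademacher's theorem `w` is
differentiable almost everywhere, and dominated convergence followed by a translation of the
variable gives the gradient formula without any regularity of `u`.

For `z ≠ 0`, pair the gradient with `z` and average over `x` and `-x`. With `G = g ^ 2` and
`k = h ^ 2`, the integrand becomes, up to a negative factor, the nonnegative weight
`-k'(‖x‖) / ‖x‖` times `(G ‖x - z‖ - G ‖x + z‖) ⟪z, x⟫`. The latter is positive off the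
hyperplane `z^⊥`, because `‖x - z‖ < ‖x + z‖` exactly when `⟪z, x⟫ > 0` and `G` is strictly
decreasing. Hence the pairing does not vanish. For `z = 0` the integrand is odd.
-/

section Correlation

variable {E : Type*} [AddGroup E] [MeasurableSpace E] {μ : Measure E} {u v w : E → ℝ}

/-- The translation correlation `z ↦ ∫ u(x) v(x + z) dμ(x)` of two real functions. It is a
convolution up to a reflection of `u`, but keeping `u` unreflected matches the functional `F`. -/
noncomputable def translationCorrelation (μ : Measure E) (u v : E → ℝ) (z : E) : ℝ :=
  ∫ x, u x * v (x + z) ∂μ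

variable [MeasurableAdd E] [μ.IsAddRightInvariant]

theorem ae_comp_add_right {p : E → Prop} (hp : ∀ᵐ x ∂μ, p x) (z : E) :
    ∀ᵐ x ∂μ, p (x + z) :=
  (measurePreserving_add_right μ z).quasiMeasurePreserving.ae hp

theorem translationCorrelation_congr_ae (h : v =ᵐ[μ] w) :
    translationCorrelation μ u v = translationCorrelation μ u w := by
  funext z
  refine integral_congr_ae ?_
  filter_upwards [ae_comp_add_right h z] with x hx
  rw [hx]

theorem integrable_mul_comp_add {M : ℝ} (hu : Integrable u μ) (hv : AEStronglyMeasurable v μ)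
    (hvM : ∀ᵐ x ∂μ, |v x| ≤ M) (z : E) :
    Integrable (fun x => u x * v (x + z)) μ :=
  hu.mul_bdd (hv.comp_measurePreserving (measurePreserving_add_right μ z))
    (ae_comp_add_right hvM z)

end Correlation

section CorrelationDerivative

variable {E : Type*} [NormedAddCommGroup E] [MeasurableSpace E] [BorelSpace E] {μ : Measure E}
  [μ.IsAddHaarMeasure] {u v : E → ℝ}

theorem hasFDerivAt_translationCorrelation [NormedSpace ℝ E] [FiniteDimensional ℝ E]
    {L : ℝ≥0} {z : E} (hu : Integrable u μ) (hv : LipschitzWith L v)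
    (huv : Integrable (fun x => u x * v (x + z)) μ) :
    Integrable (fun x => u x • fderiv ℝ v (x + z)) μ ∧
      HasFDerivAt (translationCorrelation μ u v) (∫ x, u x • fderiv ℝ v (x + z) ∂μ) z := by
  have hmeas (z' : E) : AEStronglyMeasurable (fun x => u x * v (x + z')) μ :=
    hu.aestronglyMeasurable.mul
      (hv.continuous.comp (continuous_id.add continuous_const)).aestronglyMeasurable
  have hlip (x : E) : LipschitzWith (nnabs (u x * L)) fun z' => u x * v (x + z') := by
    refine LipschitzWith.of_dist_le_mul fun a b => ?_
    have hvab : |v (x + a) - v (x + b)| ≤ L * dist a b := by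
      simpa [Real.dist_eq] using hv.dist_le_mul (x + a) (x + b)
    rw [Real.dist_eq, ← mul_sub, abs_mul, coe_nnabs, abs_mul, NNReal.abs_eq, mul_assoc]
    gcongr
  refine hasFDerivAt_integral_of_dominated_loc_of_lip (bound := fun x => u x * L)
    Filter.univ_mem (.of_forall hmeas) huv ?_ (.of_forall fun x => (hlip x).lipschitzOnWith)
    (hu.mul_const _) ?_
  · exact hu.aestronglyMeasurable.smul
      ((measurable_fderiv ℝ v).comp (measurable_add_const z)).aestronglyMeasurable
  · filter_upwards [ae_comp_add_right hv.ae_differentiableAt z] with x hx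
    exact (hx.hasFDerivAt.comp z ((hasFDerivAt_id z).const_add x)).const_mul (u x)

theorem hasGradientAt_translationCorrelation [InnerProductSpace ℝ E] [FiniteDimensional ℝ E]
    {L : ℝ≥0} {z : E} (hu : Integrable u μ) (hv : LipschitzWith L v)
    (huv : Integrable (fun x => u x * v (x + z)) μ) :
    Integrable (fun x => u x • ∇ v (x + z)) μ ∧
      HasGradientAt (translationCorrelation μ u v) (∫ x, u x • ∇ v (x + z) ∂μ) z := by
  obtain ⟨hint, hderiv⟩ := hasFDerivAt_translationCorrelation hu hv huv
  -- Over `ℝ` a conjugate-linear map is linear by unfolding `conj`.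
  let riesz : StrongDual ℝ E →L[ℝ] E :=
    ((toDual ℝ E).symm.toContinuousLinearEquiv : StrongDual ℝ E →L⋆[ℝ] E)
  have hriesz (x : E) : riesz (u x • fderiv ℝ v (x + z)) = u x • ∇ v (x + z) :=
    riesz.map_smul _ _
  refine ⟨by simpa only [hriesz] using riesz.integrable_comp hint, ?_⟩
  simp only [← hriesz, riesz.integral_comp_comm hint]
  exact hderiv.hasGradientAt

end CorrelationDerivative

section Profiles

variable {f f' : ℝ → ℝ} {s : Set ℝ}

theorem exists_lipschitzWith_eqOn_of_hasDerivWithinAt {B : ℝ} (hs : Convex ℝ s)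
    (hf : ∀ r ∈ s, HasDerivWithinAt f (f' r) s r) (hf' : ∀ r ∈ s, |f' r| ≤ B) :
    ∃ (L : ℝ≥0) (p : ℝ → ℝ), LipschitzWith L p ∧ EqOn f p s := by
  obtain ⟨p, hp⟩ := (hs.lipschitzOnWith_of_nnnorm_hasDerivWithin_le (C := B.toNNReal) hf
    fun r hr => NNReal.le_toNNReal_of_coe_le (hf' r hr)).extend_real
  exact ⟨_, p, hp⟩

theorem hasDerivAt_nonpos_of_antitoneOn_Ioi {a c r : ℝ} (hf : AntitoneOn f (Ioi a)) (hr : a < r)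
    (hd : HasDerivAt f c r) : c ≤ 0 := by
  rw [← hd.hasDerivWithinAt.derivWithin (isOpen_Ioi.uniqueDiffWithinAt hr)]
  exact hf.derivWithin_nonpos

theorem not_eqOn_zero_of_strictAntiOn_Ioi {a : ℝ} (hf : StrictAntiOn f (Ioi a))
    (hd : ∀ r ∈ Ioi a, HasDerivAt f (f' r) r) : ¬EqOn f' 0 (Ioi a) := by
  intro h0
  have ha : a + 1 ∈ Ioi a := by simp
  have hb : a + 2 ∈ Ioi a := by simp
  exact (hf ha hb (by linarith)).ne' <| isOpen_Ioi.is_const_of_deriv_eq_zero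
    isPreconnected_Ioi (fun r hr => (hd r hr).differentiableAt.differentiableWithinAt)
    (fun r hr => (hd r hr).deriv.trans (h0 hr)) ha hb

theorem strictAntiOn_sq (hf : StrictAntiOn f s) (hf_nonneg : ∀ r ∈ s, 0 ≤ f r) :
    StrictAntiOn (fun r => f r ^ 2) s :=
  fun _ ha _ hb hab => pow_lt_pow_left₀ (hf ha hb hab) (hf_nonneg _ hb) two_ne_zero

theorem eqOn_zero_of_eqOn_mul_deriv_zero (hs : IsOpen s) (hf_nonneg : ∀ r ∈ s, 0 ≤ f r)
    (hd : ∀ r ∈ s, HasDerivAt f (f' r) r) (h0 : EqOn (fun r => f r * f' r) 0 s) :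
    EqOn f' 0 s := by
  intro r hr
  rcases mul_eq_zero.1 (h0 hr) with hfr | hf'r
  · have hmin : IsLocalMin f r := by
      filter_upwards [hs.mem_nhds hr] with t ht using hfr.trans_le (hf_nonneg t ht)
    exact hmin.hasDerivAt_eq_zero (hd r hr)
  · exact hf'r

end Profiles

section RadialFunctions

variable {E : Type*} [NormedAddCommGroup E] {f : ℝ → ℝ}

theorem continuousOn_comp_norm (hf : ContinuousOn f (Ioi 0)) :
    ContinuousOn (fun x : E => f ‖x‖) {0}ᶜ :=
  hf.comp continuous_norm.continuousOn fun _ hx => norm_pos_iff.2 hx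

variable [MeasurableSpace E] [BorelSpace E] {μ : Measure E}

theorem aestronglyMeasurable_comp_norm [NullSingletonClass μ] (hf : ContinuousOn f (Ioi 0)) :
    AEStronglyMeasurable (fun x => f ‖x‖) μ := by
  have hmeas := (continuousOn_comp_norm hf).aestronglyMeasurable (μ := μ)
    (measurableSet_singleton 0).compl
  rwa [restrict_compl_singleton] at hmeas

variable [NormedSpace ℝ E] [Nontrivial E]

theorem eqOn_Ioi_zero_of_comp_norm_ae_eq_zero [μ.IsOpenPosMeasure] (hf : ContinuousOn f (Ioi 0))
    (h0 : ∀ᵐ x ∂μ, x ≠ 0 → f ‖x‖ = 0) : EqOn f 0 (Ioi 0) := by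
  have heq : EqOn (fun x : E => f ‖x‖) 0 {0}ᶜ := Measure.eqOn_open_of_ae_eq
    ((ae_restrict_iff' (measurableSet_singleton 0).compl).2 h0) isOpen_compl_singleton
    (continuousOn_comp_norm hf) continuousOn_const
  intro r hr
  obtain ⟨x, rfl⟩ := exists_norm_eq E (le_of_lt hr)
  exact heq (norm_pos_iff.1 hr)

variable [FiniteDimensional ℝ E] [μ.IsAddHaarMeasure]

theorem integrable_exp_neg_mul_norm {δ : ℝ} (hδ : 0 < δ) :
    Integrable (fun x : E => exp (-δ * ‖x‖)) μ := by
  rw [integrable_fun_norm_addHaar μ (f := fun r => exp (-δ * r))]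
  simpa using integrableOn_rpow_mul_exp_neg_mul_rpow (p := 1) (b := δ)
    (s := ((Module.finrank ℝ E - 1 : ℕ) : ℝ)) (neg_one_lt_zero.trans_le (Nat.cast_nonneg _))
    one_pos hδ

theorem integrable_sq_comp_norm_of_exp_decay {C δ : ℝ} (hδ : 0 < δ)
    (hf : ContinuousOn f (Ioi 0)) (hfb : ∀ r ∈ Ioi 0, |f r| ≤ C * exp (-δ * r)) :
    Integrable (fun x => f ‖x‖ ^ 2) μ := by
  refine ((integrable_exp_neg_mul_norm (mul_pos two_pos hδ)).const_mul (C ^ 2)).mono'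
    ((aestronglyMeasurable_comp_norm hf).pow 2) ?_
  filter_upwards [μ.ae_ne 0] with x hx
  calc ‖f ‖x‖ ^ 2‖ = |f ‖x‖| ^ 2 := by rw [norm_pow, norm_eq_abs]
    _ ≤ (C * exp (-δ * ‖x‖)) ^ 2 := by gcongr; exact hfb _ (norm_pos_iff.2 hx)
    _ = C ^ 2 * exp (-(2 * δ) * ‖x‖) := by
      rw [mul_pow, ← exp_nat_mul]
      ring_nf

end RadialFunctions

section RadialGradient

variable {E : Type*} [NormedAddCommGroup E] [InnerProductSpace ℝ E] {k k' : ℝ → ℝ}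

theorem hasGradientAt_norm [CompleteSpace E] {x : E} (hx : x ≠ 0) :
    HasGradientAt (fun y : E => ‖y‖) (‖x‖⁻¹ • x) x := by
  have hsqrt := (hasStrictFDerivAt_norm_sq x).hasFDerivAt.sqrt
    (pow_ne_zero 2 (norm_ne_zero_iff.2 hx))
  simp only [sqrt_sq (norm_nonneg _)] at hsqrt
  rw [hasGradientAt_iff_hasFDerivAt]
  convert! hsqrt using 1
  ext y
  simp only [map_smul, smul_apply, toDual_apply_apply, coe_innerSL_apply, smul_eq_mul, one_div,
    mul_inv_rev, nsmul_eq_mul, Nat.cast_ofNat]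
  field_simp

theorem hasGradientAt_comp_norm [CompleteSpace E] {c : ℝ} {x : E} (hx : x ≠ 0)
    (hk : HasDerivAt k c ‖x‖) : HasGradientAt (fun y => k ‖y‖) (c • (‖x‖⁻¹ • x)) x := by
  rw [hasGradientAt_iff_hasFDerivAt, map_smul]
  exact hk.comp_hasFDerivAt x (hasGradientAt_norm hx).hasFDerivAt

variable [FiniteDimensional ℝ E] [Nontrivial E] [MeasurableSpace E] [BorelSpace E]
  {μ : Measure E} [μ.IsAddHaarMeasure]

theorem hasGradientAt_translationCorrelation_radial {u : E → ℝ} {B : ℝ} {z : E}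
    (hu : Integrable u μ) (hk : ∀ r ∈ Ioi 0, HasDerivAt k (k' r) r)
    (hk' : ∀ r ∈ Ioi 0, |k' r| ≤ B) (huk : Integrable (fun x => u x * k ‖x + z‖) μ) :
    Integrable (fun x => (u (x - z) * k' ‖x‖) • (‖x‖⁻¹ • x)) μ ∧
      HasGradientAt (translationCorrelation μ u fun x => k ‖x‖)
        (∫ x, (u (x - z) * k' ‖x‖) • (‖x‖⁻¹ • x) ∂μ) z := by
  obtain ⟨L, p, hp, hkp⟩ := exists_lipschitzWith_eqOn_of_hasDerivWithinAt (convex_Ioi 0)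
    (fun r hr => (hk r hr).hasDerivWithinAt) hk'
  have hae : (fun x : E => k ‖x‖) =ᵐ[μ] fun x => p ‖x‖ := by
    filter_upwards [μ.ae_ne 0] with x hx using hkp (norm_pos_iff.2 hx)
  have hgrad : ∀ᵐ x ∂μ, ∇ (fun y => p ‖y‖) x = k' ‖x‖ • (‖x‖⁻¹ • x) := by
    filter_upwards [μ.ae_ne 0] with x hx
    have hpos : 0 < ‖x‖ := norm_pos_iff.2 hx
    exact (hasGradientAt_comp_norm hx <| (hk _ hpos).congr_of_eventuallyEq <|
      (hkp.eventuallyEq_of_mem (Ioi_mem_nhds hpos)).symm).gradient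
  have hup : Integrable (fun x => u x * p ‖x + z‖) μ := by
    refine huk.congr ?_
    filter_upwards [ae_comp_add_right hae z] with x hx using congrArg (u x * ·) hx
  have hshift : (fun x => u x • ∇ (fun y => p ‖y‖) (x + z)) =ᵐ[μ]
      fun x => (u (x + z - z) * k' ‖x + z‖) • (‖x + z‖⁻¹ • (x + z)) := by
    filter_upwards [ae_comp_add_right hgrad z] with x hx
    rw [hx, add_sub_cancel_right, mul_smul]
  obtain ⟨hint, hderiv⟩ :=
    hasGradientAt_translationCorrelation hu (hp.comp lipschitzWith_one_norm) hup
  rw [translationCorrelation_congr_ae hae]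
  refine ⟨by simpa only [sub_add_cancel] using (hint.congr hshift).comp_sub_right z, ?_⟩
  rw [← integral_add_right_eq_self _ z, ← integral_congr_ae hshift]
  exact hderiv

end RadialGradient

section CriticalPoint

theorem integral_eq_zero_of_odd {X F : Type*} [MeasurableSpace X] [AddGroup X] [MeasurableNeg X]
    [NormedAddCommGroup F] [NormedSpace ℝ F] {μ : Measure X} [μ.IsNegInvariant] {f : X → F}
    (hf : f.Odd) : ∫ x, f x ∂μ = 0 := by
  have hneg : ∫ x, f x ∂μ = -∫ x, f x ∂μ := by
    simpa only [hf _, integral_neg] using (integral_neg_eq_self f μ).symm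
  have htwo : (2 : ℝ) • ∫ x, f x ∂μ = 0 := by
    rw [two_smul]
    exact add_eq_zero_iff_eq_neg.2 hneg
  exact (smul_eq_zero.1 htwo).resolve_left two_ne_zero

variable {E : Type*} [NormedAddCommGroup E] [InnerProductSpace ℝ E] {G : ℝ → ℝ} {x z : E}

theorem norm_sub_lt_norm_add_iff : ‖x - z‖ < ‖x + z‖ ↔ 0 < inner ℝ z x := by
  rw [← sq_lt_sq₀ (norm_nonneg _) (norm_nonneg _), norm_sub_sq_real, norm_add_sq_real,
    real_inner_comm]
  constructor <;> intro h <;> linarith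

theorem mul_inner_pos_of_strictAntiOn (hG : StrictAntiOn G (Ici 0)) (hzx : inner ℝ z x ≠ 0) :
    0 < (G ‖x - z‖ - G ‖x + z‖) * inner ℝ z x := by
  rcases hzx.lt_or_gt with hneg | hpos
  · have hlt : ‖x + z‖ < ‖x - z‖ := by
      simpa [sub_eq_add_neg] using
        (norm_sub_lt_norm_add_iff (x := x) (z := -z)).2 (by simpa [inner_neg_left] using hneg)
    exact mul_pos_of_neg_of_neg (sub_neg.2 (hG (norm_nonneg _) (norm_nonneg _) hlt)) hneg
  · exact mul_pos (sub_pos.2 (hG (norm_nonneg _) (norm_nonneg _)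
      (norm_sub_lt_norm_add_iff.2 hpos))) hpos

variable [FiniteDimensional ℝ E] [MeasurableSpace E] [BorelSpace E] {μ : Measure E}
  [μ.IsAddHaarMeasure] {ω : E → ℝ}

theorem ae_inner_ne_zero (hz : z ≠ 0) : ∀ᵐ x ∂μ, inner ℝ z x ≠ 0 := by
  have hker : (innerₛₗ ℝ z).ker ≠ ⊤ := fun h =>
    hz (inner_self_eq_zero.1 (LinearMap.mem_ker.1 (h ▸ Submodule.mem_top : z ∈ _)))
  simpa [ae_iff, ← SetLike.setOfPred_mem_eq] using! Measure.addHaar_submodule μ _ hker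

theorem inner_integral_pos (hG : StrictAntiOn G (Ici 0)) (hω : ω.Even) (hω_nonneg : 0 ≤ ω)
    (hω_ne : ¬ω =ᵐ[μ] 0) (hint : Integrable (fun x => (G ‖x - z‖ * ω x) • x) μ) (hz : z ≠ 0) :
    0 < inner ℝ z (∫ x, (G ‖x - z‖ * ω x) • x ∂μ) := by
  set f : E → ℝ := fun x => inner ℝ z ((G ‖x - z‖ * ω x) • x) with hf
  have hf_int : Integrable f μ := hint.const_inner z
  have hsymm (x : E) : f x + f (-x) = ω x * ((G ‖x - z‖ - G ‖x + z‖) * inner ℝ z x) := by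
    have hnorm : ‖-x - z‖ = ‖x + z‖ := by rw [← norm_neg]; congr 1; abel
    simp only [hf, hω x, hnorm, inner_neg_right, inner_smul_right]
    ring
  have hsymm_nonneg : 0 ≤ fun x => f x + f (-x) := by
    intro x
    simp only [Pi.zero_apply, hsymm]
    rcases eq_or_ne (inner ℝ z x) 0 with hzx | hzx
    · simp [hzx]
    · exact mul_nonneg (hω_nonneg x) (mul_inner_pos_of_strictAntiOn hG hzx).le
  have hsymm_pos : 0 < ∫ x, f x + f (-x) ∂μ := by
    refine (integral_nonneg hsymm_nonneg).lt_of_ne fun h0 => hω_ne ?_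
    filter_upwards [(integral_eq_zero_iff_of_nonneg hsymm_nonneg
      (hf_int.add hf_int.comp_neg)).1 h0.symm, ae_inner_ne_zero hz] with x hx hzx
    rw [hsymm] at hx
    exact (mul_eq_zero.1 hx).resolve_right (mul_inner_pos_of_strictAntiOn hG hzx).ne'
  rw [integral_add hf_int hf_int.comp_neg, integral_neg_eq_self] at hsymm_pos
  rw [← integral_inner hint]
  linarith

theorem integral_smul_eq_zero_iff (hG : StrictAntiOn G (Ici 0)) (hω : ω.Even) (hω_nonneg : 0 ≤ ω)
    (hω_ne : ¬ω =ᵐ[μ] 0) (hint : Integrable (fun x => (G ‖x - z‖ * ω x) • x) μ) :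
    ∫ x, (G ‖x - z‖ * ω x) • x ∂μ = 0 ↔ z = 0 := by
  refine ⟨fun h0 => ?_, ?_⟩
  · by_contra hz
    simpa [h0] using inner_integral_pos hG hω hω_nonneg hω_ne hint hz
  · rintro rfl
    exact integral_eq_zero_of_odd fun x => by simp [hω x]

theorem integral_radial_smul_eq_zero_iff [Nontrivial E] {k k' : ℝ → ℝ}
    (hG : StrictAntiOn G (Ici 0)) (hk : AntitoneOn k (Ioi 0))
    (hd : ∀ r ∈ Ioi 0, HasDerivAt k (k' r) r) (hk' : ContinuousOn k' (Ioi 0))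
    (hk'_ne : ¬EqOn k' 0 (Ioi 0))
    (hint : Integrable (fun x => (G ‖x - z‖ * k' ‖x‖) • (‖x‖⁻¹ • x)) μ) :
    ∫ x, (G ‖x - z‖ * k' ‖x‖) • (‖x‖⁻¹ • x) ∂μ = 0 ↔ z = 0 := by
  set ω : E → ℝ := fun x => -(k' ‖x‖ * ‖x‖⁻¹) with hω
  have hω_even : ω.Even := fun x => by simp [hω]
  have hω_nonneg : 0 ≤ ω := by
    intro x
    rcases eq_or_ne x 0 with rfl | hx
    · simp [hω]
    · have hpos : 0 < ‖x‖ := norm_pos_iff.2 hx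
      have hk'x := hasDerivAt_nonpos_of_antitoneOn_Ioi hk hpos (hd _ hpos)
      exact neg_nonneg.2 (mul_nonpos_of_nonpos_of_nonneg hk'x (by positivity))
  have hω_ne : ¬ω =ᵐ[μ] 0 := by
    intro h0
    refine hk'_ne (eqOn_Ioi_zero_of_comp_norm_ae_eq_zero (μ := μ) hk' ?_)
    filter_upwards [h0] with x hx hx0
    simpa [hω, hx0] using hx
  have hfield : (fun x => (G ‖x - z‖ * k' ‖x‖) • (‖x‖⁻¹ • x)) =
      fun x => -((G ‖x - z‖ * ω x) • x) := by
    funext x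
    rw [smul_smul, ← neg_smul]
    congr 1
    ring
  rw [hfield] at hint ⊢
  rw [integral_neg, neg_eq_zero]
  exact integral_smul_eq_zero_iff hG hω_even hω_nonneg hω_ne (by simpa using hint.neg)

end CriticalPoint

theorem correlation_gradient_formula_and_critical_point_general {E : Type*}
    [NormedAddCommGroup E] [InnerProductSpace ℝ E] [FiniteDimensional ℝ E] [Nontrivial E]
    [MeasurableSpace E] [BorelSpace E] (μ : Measure E) [μ.IsAddHaarMeasure] {g h h' : ℝ → ℝ}
    {B : ℝ} (hg_nonneg : ∀ r ∈ Ici (0 : ℝ), 0 ≤ g r) (hh_nonneg : ∀ r ∈ Ici (0 : ℝ), 0 ≤ h r)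
    (hg : StrictAntiOn g (Ici 0)) (hh : AntitoneOn h (Ici 0))
    (hh' : ∀ r ∈ Ioi (0 : ℝ), HasDerivAt h (h' r) r) (hh'c : ContinuousOn h' (Ioi 0))
    (hh'_ne : ¬EqOn h' 0 (Ioi 0)) (hg_int : Integrable (fun x : E => g ‖x‖ ^ 2) μ)
    (hh'b : ∀ r ∈ Ioi (0 : ℝ), |h' r| ≤ B) (z : E) :
    DifferentiableAt ℝ (fun z' => ∫ x, g ‖x‖ ^ 2 * h ‖x + z'‖ ^ 2 ∂μ) z ∧
      ∇ (fun z' => ∫ x, g ‖x‖ ^ 2 * h ‖x + z'‖ ^ 2 ∂μ) z =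
        ∫ x, (g ‖x - z‖ ^ 2 * (2 * h ‖x‖ * h' ‖x‖)) • (‖x‖⁻¹ • x) ∂μ ∧
      (∇ (fun z' => ∫ x, g ‖x‖ ^ 2 * h ‖x + z'‖ ^ 2 ∂μ) z = 0 ↔ z = 0) := by
  have hh_le : ∀ r ∈ Ici (0 : ℝ), |h r| ≤ h 0 := fun r hr => by
    rw [abs_of_nonneg (hh_nonneg r hr)]
    exact hh self_mem_Ici hr hr
  have hhc : ContinuousOn h (Ioi 0) := fun r hr => (hh' r hr).continuousAt.continuousWithinAt
  have hderiv : ∀ r ∈ Ioi (0 : ℝ), HasDerivAt (fun s => h s ^ 2) (2 * h r * h' r) r :=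
    fun r hr => by simpa using (hh' r hr).fun_pow 2
  have hderiv_le : ∀ r ∈ Ioi (0 : ℝ), |2 * h r * h' r| ≤ 2 * h 0 * B := fun r hr => by
    rw [abs_mul, abs_mul, abs_two]
    have hhr := hh_le r (Ioi_subset_Ici_self hr)
    have hh0 := (abs_nonneg _).trans hhr
    gcongr
    exact hh'b r hr
  have hint : Integrable (fun x => g ‖x‖ ^ 2 * h ‖x + z‖ ^ 2) μ :=
    integrable_mul_comp_add (M := h 0 ^ 2) hg_int ((aestronglyMeasurable_comp_norm hhc).pow 2)
      (.of_forall fun x => by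
        simpa using pow_le_pow_left₀ (abs_nonneg _) (hh_le _ (norm_nonneg x)) 2) z
  obtain ⟨hgrad_int, hgrad⟩ :=
    hasGradientAt_translationCorrelation_radial hg_int hderiv hderiv_le hint
  have hsq_anti : AntitoneOn (fun r => h r ^ 2) (Ioi 0) := fun a ha b hb hab =>
    pow_le_pow_left₀ (hh_nonneg b (Ioi_subset_Ici_self hb))
      (hh (Ioi_subset_Ici_self ha) (Ioi_subset_Ici_self hb) hab) 2
  have hderiv_ne : ¬EqOn (fun r => 2 * h r * h' r) 0 (Ioi 0) := fun h0 =>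
    hh'_ne <| eqOn_zero_of_eqOn_mul_deriv_zero isOpen_Ioi
      (fun r hr => hh_nonneg r (Ioi_subset_Ici_self hr)) hh'
      fun r hr => by simpa [mul_assoc] using h0 hr
  have hgrad_zero := integral_radial_smul_eq_zero_iff (strictAntiOn_sq hg hg_nonneg)
    hsq_anti hderiv ((continuousOn_const.mul hhc).mul hh'c) hderiv_ne hgrad_int
  exact ⟨hgrad.differentiableAt, hgrad.gradient, (Eq.congr_left hgrad.gradient).trans hgrad_zero⟩

theorem correlation_gradient_formula_and_critical_point
    (N : ℕ) (hN : N = 1 ∨ N = 2 ∨ N = 3) (g h g' h' : ℝ → ℝ)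
    (hgpos : ∀ r : ℝ, 0 ≤ r → 0 < g r) (hhpos : ∀ r : ℝ, 0 ≤ r → 0 < h r)
    (hganti : StrictAntiOn g (Set.Ici 0)) (hhanti : StrictAntiOn h (Set.Ici 0))
    (hg' : ∀ r ∈ Set.Ioi (0 : ℝ), HasDerivAt g (g' r) r)
    (hh' : ∀ r ∈ Set.Ioi (0 : ℝ), HasDerivAt h (h' r) r)
    (hg'c : ContinuousOn g' (Set.Ioi 0)) (hh'c : ContinuousOn h' (Set.Ioi 0))
    (hdecay : ∃ C δ : ℝ, 0 < C ∧ 0 < δ ∧ ∀ r : ℝ, 0 < r →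
      g r + h r + |g' r| + |h' r| ≤ C * Real.exp (-δ * r)) :
    ∀ z : EuclideanSpace ℝ (Fin N),
      DifferentiableAt ℝ
        (fun z' : EuclideanSpace ℝ (Fin N) =>
          ∫ x : EuclideanSpace ℝ (Fin N), (g ‖x‖) ^ 2 * (h ‖x + z'‖) ^ 2) z ∧
      gradient
          (fun z' : EuclideanSpace ℝ (Fin N) =>
            ∫ x : EuclideanSpace ℝ (Fin N), (g ‖x‖) ^ 2 * (h ‖x + z'‖) ^ 2) z
        = (∫ x : EuclideanSpace ℝ (Fin N),
            ((g ‖x - z‖) ^ 2 * (2 * h ‖x‖ * h' ‖x‖)) • (‖x‖⁻¹ • x)) ∧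
      (gradient
          (fun z' : EuclideanSpace ℝ (Fin N) =>
            ∫ x : EuclideanSpace ℝ (Fin N), (g ‖x‖) ^ 2 * (h ‖x + z'‖) ^ 2) z = 0
        ↔ z = 0) := by
  intro z
  have : Nontrivial (EuclideanSpace ℝ (Fin N)) :=
    Module.nontrivial_of_finrank_pos (R := ℝ) (by rw [finrank_euclideanSpace_fin]; omega)
  obtain ⟨C, δ, hC, hδ, hdecay⟩ := hdecay
  have hg_decay : ∀ r ∈ Ioi (0 : ℝ), |g r| ≤ C * exp (-δ * r) := fun r hr => by
    rw [abs_of_pos (hgpos r (le_of_lt hr))]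
    linarith [hdecay r hr, hhpos r (le_of_lt hr), abs_nonneg (g' r), abs_nonneg (h' r)]
  have hh'_le : ∀ r ∈ Ioi (0 : ℝ), |h' r| ≤ C := fun r hr => by
    have hexp : C * exp (-δ * r) ≤ C :=
      mul_le_of_le_one_right hC.le (exp_le_one_iff.2 (by nlinarith [mem_Ioi.1 hr]))
    linarith [hdecay r hr, hgpos r (le_of_lt hr), hhpos r (le_of_lt hr), abs_nonneg (g' r)]
  have hh'_ne := not_eqOn_zero_of_strictAntiOn_Ioi (hhanti.mono Ioi_subset_Ici_self) hh'
  have hg_int := integrable_sq_comp_norm_of_exp_decay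
    (μ := (volume : Measure (EuclideanSpace ℝ (Fin N)))) hδ
    (fun r hr => (hg' r hr).continuousAt.continuousWithinAt) hg_decay
  exact correlation_gradient_formula_and_critical_point_general volume
    (fun r hr => (hgpos r hr).le) (fun r hr => (hhpos r hr).le) hganti hhanti.antitoneOn
    hh' hh'c hh'_ne hg_int hh'_le z
end
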